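/- arXiv:quant-ph/0407097 — 2 statements merged into one kernel-verified Lean document; each statement's English description precedes it below -/
import Mathlib

section
/- For any d ≥ 1 and each j ∈ {1, 2, 3}, the partial trace over the j-th tensor factor of the orthogonal projection Q_d = (1/6)·{ I − V_d⊗I − I⊗V_d − (I⊗V_d)(V_d⊗I)(I⊗V_d) + (I⊗V_d)(V_d⊗I) + (V_d⊗I)(I⊗V_d) } on ℂ^d ⊗ ℂ^d ⊗ ℂ^d equals ((d−2)/6)·(I − V_d), an operator on ℂ^d ⊗ ℂ^d. -/
open Matrix Kronecker

/-- The flip (swap) operator `V_d` on `ℂ^d ⊗ ℂ^d`, modeled as a matrix: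
`V_d (ψ₁ ⊗ ψ₂) = ψ₂ ⊗ ψ₁`. -/
def flipM (d : ℕ) : Matrix (Fin d × Fin d) (Fin d × Fin d) ℂ :=
  fun p q => if p.1 = q.2 ∧ p.2 = q.1 then 1 else 0

/-- `V_d ⊗ I` on `ℂ^d ⊗ ℂ^d ⊗ ℂ^d`: the Kronecker product `V_d ⊗ₖ I`, reindexed by the
associativity equivalence to the index type `Fin d × Fin d × Fin d`. -/
def V12 (d : ℕ) : Matrix (Fin d × Fin d × Fin d) (Fin d × Fin d × Fin d) ℂ :=
  Matrix.reindex (Equiv.prodAssoc (Fin d) (Fin d) (Fin d))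
    (Equiv.prodAssoc (Fin d) (Fin d) (Fin d))
    (flipM d ⊗ₖ (1 : Matrix (Fin d) (Fin d) ℂ))

/-- `I ⊗ V_d` on `ℂ^d ⊗ ℂ^d ⊗ ℂ^d`. -/
def V23 (d : ℕ) : Matrix (Fin d × Fin d × Fin d) (Fin d × Fin d × Fin d) ℂ :=
  (1 : Matrix (Fin d) (Fin d) ℂ) ⊗ₖ flipM d

/-- `Q_d = (1/6)·{ I − V_d⊗I − I⊗V_d − (I⊗V_d)(V_d⊗I)(I⊗V_d)
      + (I⊗V_d)(V_d⊗I) + (V_d⊗I)(I⊗V_d) }` on `ℂ^d ⊗ ℂ^d ⊗ ℂ^d`. -/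
noncomputable def Q (d : ℕ) : Matrix (Fin d × Fin d × Fin d) (Fin d × Fin d × Fin d) ℂ :=
  ((6 : ℂ)⁻¹) • ((1 : Matrix (Fin d × Fin d × Fin d) (Fin d × Fin d × Fin d) ℂ)
    - V12 d - V23 d - V23 d * V12 d * V23 d + V23 d * V12 d + V12 d * V23 d)


/-- The partial trace over the `j`-th tensor factor (`j = 0,1,2` for the first, second,
third factor) of an operator on `ℂ^d ⊗ ℂ^d ⊗ ℂ^d`, yielding an operator on `ℂ^d ⊗ ℂ^d`. -/
noncomputable def ptr (d : ℕ) (j : Fin 3)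
    (T : Matrix (Fin d × Fin d × Fin d) (Fin d × Fin d × Fin d) ℂ) :
    Matrix (Fin d × Fin d) (Fin d × Fin d) ℂ :=
  match j with
  | 0 => fun p q => ∑ k : Fin d, T (k, p.1, p.2) (k, q.1, q.2)
  | 1 => fun p q => ∑ k : Fin d, T (p.1, k, p.2) (q.1, k, q.2)
  | 2 => fun p q => ∑ k : Fin d, T (p.1, p.2, k) (q.1, q.2, k)

/-!
`Q d` is the antisymmetrizer of the representation of `S₃` on `ℂ^d ⊗ ℂ^d ⊗ ℂ^d`, so conjugating
it by `V12 d` or `V23 d` does not change it; since these conjugations permute the tensor factors,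
the three partial traces of `Q d` coincide. The one over the first factor is read off term by term:
with `V23 d = 1 ⊗ₖ V`, the factors `V23 d` can be pulled out of it as `V`, while `V12 d` has partial
trace `1`. The six terms then give `d - 1 - d V - V² + V + V = (d - 2) (1 - V)`.
-/

section PartialTrace

variable {k l m n R : Type*} [Fintype l]

/-- The partial trace `tr ⊗ id` over the first tensor factor, as a linear map. The other factor may
be rectangular. -/
def partialTraceLeft [Semiring R] : Matrix (l × m) (l × n) R →ₗ[R] Matrix m n R where
  toFun T := of fun i j => ∑ a, T (a, i) (a, j)
  map_add' S T := by ext; simp [Finset.sum_add_distrib]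
  map_smul' c T := by ext; simp [Finset.mul_sum]

variable [Semiring R]

theorem partialTraceLeft_apply (T : Matrix (l × m) (l × n) R) (i : m) (j : n) :
    partialTraceLeft T i j = ∑ a, T (a, i) (a, j) :=
  rfl

theorem partialTraceLeft_kronecker (A : Matrix l l R) (B : Matrix m n R) :
    partialTraceLeft (A ⊗ₖ B) = A.trace • B := by
  ext i j
  simp [partialTraceLeft_apply, trace, Finset.sum_mul]

theorem partialTraceLeft_reindex_prodAssoc_kronecker {m' n' : Type*}
    (A : Matrix (l × m) (l × n) R) (B : Matrix m' n' R) :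
    partialTraceLeft (reindex (.prodAssoc l m m') (.prodAssoc l n n') (A ⊗ₖ B)) =
      partialTraceLeft A ⊗ₖ B := by
  ext i j
  simp [partialTraceLeft_apply, Finset.sum_mul]

variable [DecidableEq l]

theorem partialTraceLeft_one_kronecker (B : Matrix m n R) :
    partialTraceLeft ((1 : Matrix l l R) ⊗ₖ B) = (Fintype.card l : R) • B := by
  rw [partialTraceLeft_kronecker, trace_one]

theorem partialTraceLeft_one_kronecker_mul [Fintype m] (A : Matrix k m R)
    (T : Matrix (l × m) (l × n) R) :
    partialTraceLeft (((1 : Matrix l l R) ⊗ₖ A) * T) = A * partialTraceLeft T := by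
  ext i j
  simp only [partialTraceLeft_apply, mul_apply, Fintype.sum_prod_type, kronecker_apply, one_apply,
    ite_mul, one_mul, zero_mul, Finset.sum_ite_irrel, Finset.sum_const_zero, Finset.sum_ite_eq,
    Finset.mem_univ, if_true, Finset.mul_sum]
  exact Finset.sum_comm

theorem partialTraceLeft_mul_one_kronecker [Fintype m] (T : Matrix (l × k) (l × m) R)
    (A : Matrix m n R) :
    partialTraceLeft (T * ((1 : Matrix l l R) ⊗ₖ A)) = partialTraceLeft T * A := by
  ext i j
  simp only [partialTraceLeft_apply, mul_apply, Fintype.sum_prod_type, kronecker_apply, one_apply,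
    ite_mul, one_mul, zero_mul, mul_ite, mul_zero, Finset.sum_ite_irrel, Finset.sum_const_zero,
    Finset.sum_ite_eq', Finset.mem_univ, if_true, Finset.sum_mul]
  exact Finset.sum_comm

theorem partialTraceLeft_permMatrix_prodComm :
    partialTraceLeft (Equiv.Perm.permMatrix R (.prodComm l l)) = 1 := by
  ext i j
  simp [partialTraceLeft_apply, PEquiv.toMatrix_apply, one_apply, ite_and, eq_comm]

end PartialTrace

section PermMatrix

variable {m n R : Type*} [DecidableEq m] [DecidableEq n]

theorem permMatrix_kronecker_permMatrix [MulZeroOneClass R] (σ : Equiv.Perm m)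
    (τ : Equiv.Perm n) :
    σ.permMatrix R ⊗ₖ τ.permMatrix R = Equiv.Perm.permMatrix R (σ.prodCongr τ) := by
  ext ⟨i, i'⟩ ⟨j, j'⟩
  simp [PEquiv.toMatrix_apply, ← ite_and, and_comm]

theorem reindex_permMatrix [Zero R] [One R] (e : m ≃ n) (σ : Equiv.Perm m) :
    reindex e e (σ.permMatrix R) = (e.permCongr σ).permMatrix R := by
  ext i j
  simp [PEquiv.toMatrix_apply, Equiv.eq_symm_apply]

end PermMatrix

section Antisymmetrizer

variable {R : Type*} [Ring R]

/-- The antisymmetrizer of `S₃`, without the normalizing factor `1 / 6`: the signed sum of the group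
elements, written as words in the images `s` and `t` of the two adjacent transpositions. -/
def antisymmetrizer (s t : R) : R :=
  1 - s - t - t * s * t + t * s + s * t

variable {s t : R}

theorem antisymmetrizer_comm (braid : s * t * s = t * s * t) :
    antisymmetrizer s t = antisymmetrizer t s := by
  rw [antisymmetrizer, antisymmetrizer, braid]
  abel

theorem mul_antisymmetrizer_mul_self (hs : s * s = 1) (braid : s * t * s = t * s * t) :
    s * antisymmetrizer s t * s = antisymmetrizer s t := by
  calc s * antisymmetrizer s t * s
      = s * s - s * s * s - s * t * s - s * (t * s * t) * s + s * t * (s * s) + s * s * t * s := by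
        rw [antisymmetrizer]; noncomm_ring
    _ = s * s - s * s * s - t * s * t - s * s * t * (s * s) + s * t * (s * s) + s * s * t * s := by
        rw [← braid]; noncomm_ring
    _ = antisymmetrizer s t := by
        rw [hs, one_mul, one_mul, mul_one, mul_one, antisymmetrizer]; abel

end Antisymmetrizer

section Swap

/-- The permutation `(a, b, c) ↦ (b, a, c)`, whose permutation matrix is `V12`. -/
def swapLeft (α : Type*) : Equiv.Perm (α × α × α) :=
  (Equiv.prodAssoc α α α).permCongr ((Equiv.prodComm α α).prodCongr 1)

/-- The permutation `(a, b, c) ↦ (a, c, b)`, whose permutation matrix is `V23`. -/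
def swapRight (α : Type*) : Equiv.Perm (α × α × α) :=
  Equiv.prodCongr 1 (Equiv.prodComm α α)

variable {α : Type*}

theorem swapLeft_mul_self : swapLeft α * swapLeft α = 1 :=
  rfl

theorem swapRight_mul_self : swapRight α * swapRight α = 1 :=
  rfl

theorem swapLeft_mul_swapRight_mul_swapLeft :
    swapLeft α * swapRight α * swapLeft α = swapRight α * swapLeft α * swapRight α :=
  rfl

end Swap

section Flip

variable (d : ℕ)

theorem flipM_eq_permMatrix : flipM d = Equiv.Perm.permMatrix ℂ (.prodComm (Fin d) (Fin d)) := by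
  ext ⟨a, b⟩ ⟨x, y⟩
  simp [flipM, PEquiv.toMatrix_apply, and_comm]

theorem V12_eq_permMatrix : V12 d = (swapLeft (Fin d)).permMatrix ℂ := by
  rw [V12, flipM_eq_permMatrix, ← permMatrix_one, permMatrix_kronecker_permMatrix,
    reindex_permMatrix, swapLeft]

theorem V23_eq_permMatrix : V23 d = (swapRight (Fin d)).permMatrix ℂ := by
  rw [V23, flipM_eq_permMatrix, ← permMatrix_one, permMatrix_kronecker_permMatrix, swapRight]

theorem flipM_mul_self : flipM d * flipM d = 1 := by
  rw [flipM_eq_permMatrix, ← permMatrix_mul, ← permMatrix_one]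
  rfl

theorem V12_mul_self : V12 d * V12 d = 1 := by
  rw [V12_eq_permMatrix, ← permMatrix_mul, swapLeft_mul_self, permMatrix_one]

theorem V23_mul_self : V23 d * V23 d = 1 := by
  rw [V23_eq_permMatrix, ← permMatrix_mul, swapRight_mul_self, permMatrix_one]

theorem V12_mul_V23_mul_V12 : V12 d * V23 d * V12 d = V23 d * V12 d * V23 d := by
  simp only [V12_eq_permMatrix, V23_eq_permMatrix, ← permMatrix_mul, ← mul_assoc,
    swapLeft_mul_swapRight_mul_swapLeft]

theorem Q_eq_smul_antisymmetrizer : Q d = (6 : ℂ)⁻¹ • antisymmetrizer (V12 d) (V23 d) :=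
  rfl

theorem V12_mul_Q_mul_V12 : V12 d * Q d * V12 d = Q d := by
  rw [Q_eq_smul_antisymmetrizer, mul_smul_comm, smul_mul_assoc,
    mul_antisymmetrizer_mul_self (V12_mul_self d) (V12_mul_V23_mul_V12 d)]

theorem V23_mul_Q_mul_V23 : V23 d * Q d * V23 d = Q d := by
  rw [Q_eq_smul_antisymmetrizer, antisymmetrizer_comm (V12_mul_V23_mul_V12 d), mul_smul_comm,
    smul_mul_assoc, mul_antisymmetrizer_mul_self (V23_mul_self d) (V12_mul_V23_mul_V12 d).symm]

theorem ptr_zero_eq_partialTraceLeft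
    (T : Matrix (Fin d × Fin d × Fin d) (Fin d × Fin d × Fin d) ℂ) :
    ptr d 0 T = partialTraceLeft T :=
  rfl

theorem ptr_one_eq_ptr_zero_conj (T : Matrix (Fin d × Fin d × Fin d) (Fin d × Fin d × Fin d) ℂ) :
    ptr d 1 T = ptr d 0 (V12 d * T * V12 d) := by
  rw [V12_eq_permMatrix, PEquiv.toMatrix_toPEquiv_mul, PEquiv.mul_toMatrix_toPEquiv]
  rfl

theorem ptr_two_eq_ptr_one_conj (T : Matrix (Fin d × Fin d × Fin d) (Fin d × Fin d × Fin d) ℂ) :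
    ptr d 2 T = ptr d 1 (V23 d * T * V23 d) := by
  rw [V23_eq_permMatrix, PEquiv.toMatrix_toPEquiv_mul, PEquiv.mul_toMatrix_toPEquiv]
  rfl

theorem partialTraceLeft_V12 : partialTraceLeft (V12 d) = 1 := by
  rw [V12, partialTraceLeft_reindex_prodAssoc_kronecker, flipM_eq_permMatrix,
    partialTraceLeft_permMatrix_prodComm, one_kronecker_one]

theorem partialTraceLeft_antisymmetrizer :
    partialTraceLeft (antisymmetrizer (V12 d) (V23 d)) = ((d : ℂ) - 2) • (1 - flipM d) := by
  have tr_one :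
      partialTraceLeft (1 : Matrix (Fin d × Fin d × Fin d) (Fin d × Fin d × Fin d) ℂ) =
        (d : ℂ) • 1 := by
    rw [← one_kronecker_one, partialTraceLeft_one_kronecker, Fintype.card_fin]
  have tr_V23 : partialTraceLeft (V23 d) = (d : ℂ) • flipM d := by
    rw [V23, partialTraceLeft_one_kronecker, Fintype.card_fin]
  have tr_V23_mul (T : Matrix (Fin d × Fin d × Fin d) (Fin d × Fin d × Fin d) ℂ) :
      partialTraceLeft (V23 d * T) = flipM d * partialTraceLeft T :=
    partialTraceLeft_one_kronecker_mul _ T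
  have tr_mul_V23 (T : Matrix (Fin d × Fin d × Fin d) (Fin d × Fin d × Fin d) ℂ) :
      partialTraceLeft (T * V23 d) = partialTraceLeft T * flipM d :=
    partialTraceLeft_mul_one_kronecker T _
  calc partialTraceLeft (antisymmetrizer (V12 d) (V23 d))
      = (d : ℂ) • 1 - 1 - (d : ℂ) • flipM d - flipM d * flipM d + flipM d + flipM d := by
        simp only [antisymmetrizer, map_add, map_sub, tr_mul_V23, tr_V23_mul, tr_one,
          tr_V23, partialTraceLeft_V12, one_mul, mul_one]
    _ = ((d : ℂ) - 2) • (1 - flipM d) := by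
        rw [flipM_mul_self]; module

theorem ptr_zero_Q : ptr d 0 (Q d) = (((d : ℂ) - 2) / 6) • (1 - flipM d) := by
  rw [ptr_zero_eq_partialTraceLeft, Q_eq_smul_antisymmetrizer, map_smul,
    partialTraceLeft_antisymmetrizer, smul_smul, inv_mul_eq_div]

end Flip

/-- For any `d ≥ 1` and each `j ∈ {1,2,3}`, the partial trace over the `j`-th tensor factor
of `Q_d` equals `((d−2)/6)·(I − V_d)` on `ℂ^d ⊗ ℂ^d`. -/
theorem Q_partialTrace (d : ℕ) (hd : 1 ≤ d) (j : Fin 3) :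
    ptr d j (Q d)
      = (((d : ℂ) - 2) / 6) • ((1 : Matrix (Fin d × Fin d) (Fin d × Fin d) ℂ) - flipM d) := by
  have ptr_one_Q : ptr d 1 (Q d) = ptr d 0 (Q d) := by
    rw [ptr_one_eq_ptr_zero_conj, V12_mul_Q_mul_V12]
  have ptr_two_Q : ptr d 2 (Q d) = ptr d 1 (Q d) := by
    rw [ptr_two_eq_ptr_one_conj, V23_mul_Q_mul_V23]
  match j with
  | 0 => exact ptr_zero_Q d
  | 1 => exact ptr_one_Q.trans (ptr_zero_Q d)
  | 2 => exact (ptr_two_Q.trans ptr_one_Q).trans (ptr_zero_Q d)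
end

section
/- For the operator T₂ = (1/4)·I − (1/8)·V₂⊗I − (1/8)·(I⊗V₂)(V₂⊗I)(I⊗V₂) on ℂ² ⊗ ℂ² ⊗ ℂ², the partial trace over the second tensor factor and the partial trace over the third tensor factor both equal the two-qubit Werner state ρ₂ = (3/8)·I − (1/4)·V₂ on ℂ² ⊗ ℂ². -/
open Matrix Kronecker

/-- The density source-operator
`T₂ = (1/4)·I − (1/8)·V₂⊗I − (1/8)·(I⊗V₂)(V₂⊗I)(I⊗V₂)` on `ℂ² ⊗ ℂ² ⊗ ℂ²`. -/
noncomputable def T2 : Matrix (Fin 2 × Fin 2 × Fin 2) (Fin 2 × Fin 2 × Fin 2) ℂ :=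
  ((4 : ℂ)⁻¹) • (1 : Matrix (Fin 2 × Fin 2 × Fin 2) (Fin 2 × Fin 2 × Fin 2) ℂ)
    - ((8 : ℂ)⁻¹) • V12 2 - ((8 : ℂ)⁻¹) • (V23 2 * V12 2 * V23 2)

/-- The two-qubit Werner state `ρ₂ = (3/8)·I − (1/4)·V₂` on `ℂ² ⊗ ℂ²`. -/
noncomputable def werner2 : Matrix (Fin 2 × Fin 2) (Fin 2 × Fin 2) ℂ :=
  ((3 : ℂ) / 8) • (1 : Matrix (Fin 2 × Fin 2) (Fin 2 × Fin 2) ℂ) - ((4 : ℂ)⁻¹) • flipM 2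

/-!
In dimension `d`, `tr³[V_d ⊗ I] = d V_d` and `tr²[V_d ⊗ I] = I`. Conjugation by `I ⊗ V_d` exchanges
the last two tensor factors, hence also the partial traces over them, so the two remaining traces,
of `(I ⊗ V_d)(V_d ⊗ I)(I ⊗ V_d)`, are the same two operators in the other order.
-/

section PartialTrace

variable {d : ℕ} (j : Fin 3) (S T : Matrix (Fin d × Fin d × Fin d) (Fin d × Fin d × Fin d) ℂ)

theorem ptr_sub : ptr d j (S - T) = ptr d j S - ptr d j T := by
  fin_cases j <;> ext p q <;> exact Finset.sum_sub_distrib ..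

theorem ptr_smul (c : ℂ) : ptr d j (c • T) = c • ptr d j T := by
  fin_cases j <;> ext p q <;> exact (Finset.mul_sum ..).symm

theorem ptr_one : ptr d j 1 = (d : ℂ) • 1 := by
  fin_cases j <;> ext p q <;> simp [ptr, one_apply, Prod.ext_iff]

theorem ptr_third_reindex_kronecker (A : Matrix (Fin d × Fin d) (Fin d × Fin d) ℂ)
    (B : Matrix (Fin d) (Fin d) ℂ) :
    ptr d 2 (reindex (Equiv.prodAssoc _ _ _) (Equiv.prodAssoc _ _ _) (A ⊗ₖ B)) = B.trace • A := by
  ext p q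
  calc ∑ k, A p q * B k k = A p q * B.trace := (Finset.mul_sum ..).symm
    _ = B.trace * A p q := mul_comm ..

end PartialTrace

section LastTwoFactors

variable {d : ℕ} (T : Matrix (Fin d × Fin d × Fin d) (Fin d × Fin d × Fin d) ℂ)

theorem V23_eq_toMatrix :
    V23 d = ((Equiv.refl _).prodCongr (Equiv.prodComm _ _)).toPEquiv.toMatrix := by
  ext ⟨i, j, k⟩ ⟨i', j', k'⟩
  simp only [V23, flipM, PEquiv.toMatrix_toPEquiv_eq, kroneckerMap_apply, submatrix_apply,
    one_apply, Equiv.prodCongr_apply, Prod.map, Equiv.refl_apply, Equiv.prodComm_apply,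
    Prod.swap_prod_mk, id_eq, Prod.mk.injEq]
  grind

theorem V23_mul_mul_V23_eq_submatrix :
    V23 d * T * V23 d = T.submatrix (Prod.map id Prod.swap) (Prod.map id Prod.swap) := by
  rw [V23_eq_toMatrix, PEquiv.toMatrix_toPEquiv_mul, PEquiv.mul_toMatrix_toPEquiv]
  rfl

theorem ptr_second_V23_mul_mul_V23 : ptr d 1 (V23 d * T * V23 d) = ptr d 2 T := by
  rw [V23_mul_mul_V23_eq_submatrix]
  rfl

theorem ptr_third_V23_mul_mul_V23 : ptr d 2 (V23 d * T * V23 d) = ptr d 1 T := by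
  rw [V23_mul_mul_V23_eq_submatrix]
  rfl

end LastTwoFactors

section Flip

variable (d : ℕ)

theorem ptr_third_V12 : ptr d 2 (V12 d) = (d : ℂ) • flipM d := by
  rw [V12, ptr_third_reindex_kronecker, trace_one, Fintype.card_fin]

theorem ptr_second_V12 : ptr d 1 (V12 d) = 1 := by
  ext p q
  calc ∑ k, flipM d (p.1, k) (q.1, k) * (1 : Matrix (Fin d) (Fin d) ℂ) p.2 q.2
      = (1 : Matrix (Fin d) (Fin d) ℂ) p.1 q.1 * (1 : Matrix (Fin d) (Fin d) ℂ) p.2 q.2 := by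
        simp [flipM, one_apply, ite_and]
    _ = (1 : Matrix (Fin d × Fin d) (Fin d × Fin d) ℂ) p q := by
        rw [← kronecker_apply, one_kronecker_one]

end Flip

theorem T2_partialTraces_eq_werner_general (d : ℕ) (a b : ℂ) :
    ptr d 1 (a • 1 - b • V12 d - b • (V23 d * V12 d * V23 d)) =
        (a * d - b) • 1 - (b * d) • flipM d ∧
      ptr d 2 (a • 1 - b • V12 d - b • (V23 d * V12 d * V23 d)) =
        (a * d - b) • 1 - (b * d) • flipM d := by
  simp only [ptr_sub, ptr_smul, ptr_one, ptr_second_V23_mul_mul_V23, ptr_third_V23_mul_mul_V23,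
    ptr_second_V12, ptr_third_V12]
  constructor <;> module

/-- The partial traces of `T₂` over the second and over the third tensor factor both
equal the two-qubit Werner state `ρ₂ = (3/8)·I − (1/4)·V₂`. -/
theorem T2_partialTraces_eq_werner :
    ptr 2 1 T2 = werner2 ∧ ptr 2 2 T2 = werner2 := by
  have coeff_one : (4 : ℂ)⁻¹ * (2 : ℕ) - 8⁻¹ = 3 / 8 := by norm_num
  have coeff_flip : (8 : ℂ)⁻¹ * (2 : ℕ) = 4⁻¹ := by norm_num
  simpa only [T2, werner2, coeff_one, coeff_flip] using
    T2_partialTraces_eq_werner_general 2 4⁻¹ 8⁻¹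
end
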